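/- arXiv:1504.02293 — 4 statements merged into one kernel-verified Lean document; each statement's English description precedes it below -/
import Mathlib

section
/- Consider the information subproblem over a finite nonempty index set I with parameters θ_i > 0 (i ∈ I), P_max > 0 and C_I > 0. Suppose ν > 0 is such that the vector P* defined by P*_i = min(P_max, max(0, ν − θ_i)) satisfies ∑_{i∈I} log₂(1 + P*_i/θ_i) = C_I. Then P* is optimal: for every vector (P_i)_{i∈I} with 0 ≤ P_i ≤ P_max for all i and ∑_{i∈I} log₂(1 + P_i/θ_i) ≥ C_I, one has ∑_{i∈I} P*_i ≤ ∑_{i∈I} P_i. -/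
open Finset

/-!
Water-filling minimizes the Lagrangian `p - ν * log (1 + p / θ)` on each channel separately: its
derivative `1 - ν / (θ + p)` has the sign of `p - (ν - θ)`, and the allocation is the projection of
`ν - θ` onto the feasible interval. Summing over the channels, the multiplier `ν` turns any rate
at least as large as that of the water-filling allocation into total power at least as large.
-/

namespace InformationSubproblem

/-- The water-filling power allocated to a channel with noise level `θ` and power cap `c` at water
level `ν`. For `0 ≤ c`, the `min`/`max` form encodes the paper's three cases: `0` if `ν < θ`,
`ν - θ` if `θ ≤ ν ≤ θ + c`, and `c` otherwise. -/
noncomputable def waterFilling (c θ ν : ℝ) : ℝ := min c (max 0 (ν - θ))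

lemma waterFilling_nonneg {c : ℝ} (hc : 0 ≤ c) (θ ν : ℝ) : 0 ≤ waterFilling c θ ν :=
  le_min hc (le_max_left _ _)

/-- The variational inequality of the projection of `y` onto `[a, b]`. -/
lemma mul_sub_clamp_nonneg {R : Type*} [Ring R] [LinearOrder R] [IsOrderedRing R] {a b x : R}
    (hx : x ∈ Set.Icc a b) (y : R) :
    0 ≤ (x - min b (max a y)) * (min b (max a y) - y) := by
  obtain ⟨hax, hxb⟩ := hx
  rcases le_total y a with hya | hay
  · rw [max_eq_left hya, min_eq_right (hax.trans hxb)]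
    exact mul_nonneg (sub_nonneg.2 hax) (sub_nonneg.2 hya)
  rw [max_eq_right hay]
  rcases le_total y b with hyb | hby
  · rw [min_eq_right hyb, sub_self, mul_zero]
  · rw [min_eq_left hby]
    exact mul_nonneg_of_nonpos_of_nonpos (sub_nonpos.2 hxb) (sub_nonpos.2 hby)

lemma log_sub_log_le_sub_div {x y : ℝ} (hx : 0 < x) (hy : 0 < y) :
    Real.log y - Real.log x ≤ (y - x) / x := by
  rw [← Real.log_div hy.ne' hx.ne', sub_div, div_self hx.ne']
  exact Real.log_le_sub_one_of_pos (div_pos hy hx)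

lemma log_one_add_div_sub_le {θ p q : ℝ} (hθ : 0 < θ) (hp : 0 ≤ p) (hq : 0 ≤ q) :
    Real.log (1 + q / θ) - Real.log (1 + p / θ) ≤ (q - p) / (θ + p) :=
  calc Real.log (1 + q / θ) - Real.log (1 + p / θ)
      ≤ (1 + q / θ - (1 + p / θ)) / (1 + p / θ) :=
        log_sub_log_le_sub_div (by positivity) (by positivity)
    _ = (q - p) / (θ + p) := by field_simp; ring

theorem waterFilling_lagrangian_le {c θ ν p : ℝ} (hν : 0 ≤ ν) (hθ : 0 < θ)
    (hp : p ∈ Set.Icc 0 c) :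
    waterFilling c θ ν - ν * Real.log (1 + waterFilling c θ ν / θ) ≤
      p - ν * Real.log (1 + p / θ) := by
  have hproj : 0 ≤ (p - waterFilling c θ ν) * (waterFilling c θ ν - (ν - θ)) :=
    mul_sub_clamp_nonneg hp (ν - θ)
  have hw := waterFilling_nonneg (hp.1.trans hp.2) θ ν
  set w := waterFilling c θ ν
  have hgain : ν * (Real.log (1 + p / θ) - Real.log (1 + w / θ)) ≤ p - w :=
    calc ν * (Real.log (1 + p / θ) - Real.log (1 + w / θ))
        ≤ ν * ((p - w) / (θ + w)) := by gcongr; exact log_one_add_div_sub_le hθ hw hp.1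
      _ ≤ p - w := by
        rw [← mul_div_assoc, div_le_iff₀ (by positivity)]
        linarith
  linarith

lemma sum_le_sum_of_lagrangian_le {ι R : Type*} [Ring R] [PartialOrder R] [IsOrderedRing R]
    {I : Finset ι} {f f' g g' : ι → R} {ν : R} (hν : 0 ≤ ν)
    (hL : ∀ i ∈ I, f i - ν * g i ≤ f' i - ν * g' i) (hg : ∑ i ∈ I, g i ≤ ∑ i ∈ I, g' i) :
    ∑ i ∈ I, f i ≤ ∑ i ∈ I, f' i := by
  have hsum := sum_le_sum hL
  simp only [sum_sub_distrib, ← mul_sum] at hsum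
  simpa only [sub_add_cancel] using add_le_add hsum (mul_le_mul_of_nonneg_left hg hν)

lemma sum_logb_le_sum_logb_iff {ι : Type*} {b : ℝ} (hb : 1 < b) (I : Finset ι) (x y : ι → ℝ) :
    ∑ i ∈ I, Real.logb b (x i) ≤ ∑ i ∈ I, Real.logb b (y i) ↔
      ∑ i ∈ I, Real.log (x i) ≤ ∑ i ∈ I, Real.log (y i) := by
  simp only [Real.logb, ← sum_div]
  exact div_le_div_iff_of_pos_right (Real.log_pos hb)

end InformationSubproblem

open InformationSubproblem

theorem stmt_4_general {ι : Type*} {I : Finset ι} {b ν : ℝ} {θ Pmax P Pstar : ι → ℝ}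
    (hb : 1 < b) (hν : 0 ≤ ν) (hθ : ∀ i ∈ I, 0 < θ i)
    (hPstar : ∀ i ∈ I, Pstar i = waterFilling (Pmax i) (θ i) ν)
    (hP : ∀ i ∈ I, P i ∈ Set.Icc 0 (Pmax i))
    (hrate : ∑ i ∈ I, Real.logb b (1 + Pstar i / θ i) ≤ ∑ i ∈ I, Real.logb b (1 + P i / θ i)) :
    ∑ i ∈ I, Pstar i ≤ ∑ i ∈ I, P i := by
  refine sum_le_sum_of_lagrangian_le hν (fun i hi ↦ ?_)
    ((sum_logb_le_sum_logb_iff hb I _ _).1 hrate)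
  rw [hPstar i hi]
  exact waterFilling_lagrangian_le hν (hθ i hi) (hP i hi)

/-- Theorem 2 (optimality): the water-filling allocation with water level `ν`
making the rate constraint tight minimizes the total power among all feasible
power allocations of the information subproblem. -/
theorem stmt_4 {ι : Type*} (I : Finset ι) (hI : I.Nonempty)
    (θ : ι → ℝ) (hθ : ∀ i ∈ I, 0 < θ i)
    (Pmax CI ν : ℝ) (hPmax : 0 < Pmax) (hCI : 0 < CI) (hν : 0 < ν)
    (Pstar : ι → ℝ)
    (hPstar : ∀ i ∈ I, Pstar i = min Pmax (max 0 (ν - θ i)))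
    (htight : ∑ i ∈ I, Real.logb 2 (1 + Pstar i / θ i) = CI) :
    ∀ P : ι → ℝ, (∀ i ∈ I, 0 ≤ P i ∧ P i ≤ Pmax) →
      (∑ i ∈ I, Real.logb 2 (1 + P i / θ i) ≥ CI) →
      ∑ i ∈ I, Pstar i ≤ ∑ i ∈ I, P i :=
  fun _P hP hrate ↦ stmt_4_general one_lt_two hν.le hθ hPstar hP (htight.trans_le hrate)
end

section
/- Let I be a finite nonempty index set, θ_i > 0 for i ∈ I, P_max > 0, C_I > 0, and ν > 0, and define P*_i = min(P_max, max(0, ν − θ_i)). Let I₁ = {i ∈ I : 0 < P*_i < P_max} and I₂ = {i ∈ I : P*_i = P_max}, and suppose I₁ is nonempty. If ∑_{i∈I} log₂(1 + P*_i/θ_i) = C_I, then ν^{|I₁|} = 2^{C_I} · (∏_{i∈I₁} θ_i) / (∏_{i∈I₂} (1 + P_max/θ_i)); equivalently ν = ρ^{1/|I₁|} with ρ = 2^{C_I} ∏_{i∈I₁} θ_i / ∏_{i∈I₂} (1 + P_max/θ_i). -/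
open Finset

/-!
Each factor `1 + P i / θ i` is `ν / θ i` on an unsaturated active channel, `1 + p i / θ i` on a
saturated one and `1` on an inactive one. Exponentiating the rate constraint turns the sum of
logarithms into the product of these factors, which is then solved for the power of `ν`.
-/

section WaterFilling

variable {K : Type*} [Field K] [LinearOrder K]

/-- The power that water-filling at level `ν` allots to a channel of noise level `t` with power
cap `p`: the depth `ν - t` of the water above the noise, truncated to `[0, p]`. -/
def waterFilling (p ν t : K) : K := min p (max 0 (ν - t))

variable {p ν t : K}

lemma waterFilling_nonneg (hp : 0 ≤ p) : 0 ≤ waterFilling p ν t :=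
  le_min hp (le_max_left _ _)

lemma waterFilling_le : waterFilling p ν t ≤ p :=
  min_le_left _ _

lemma waterFilling_eq_sub (hpos : 0 < waterFilling p ν t) (hlt : waterFilling p ν t < p) :
    waterFilling p ν t = ν - t := by
  have hmax : waterFilling p ν t = max 0 (ν - t) :=
    min_eq_right ((min_lt_iff.mp hlt).resolve_left (lt_irrefl p)).le
  have hsub : 0 < ν - t := (lt_max_iff.mp (hmax ▸ hpos)).resolve_left (lt_irrefl 0)
  rw [hmax, max_eq_right hsub.le]

lemma one_add_waterFilling_div (hp : 0 ≤ p) (ht : t ≠ 0) :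
    1 + waterFilling p ν t / t =
      (if 0 < waterFilling p ν t ∧ waterFilling p ν t < p then ν / t else 1) *
        (if waterFilling p ν t = p then 1 + p / t else 1) := by
  rcases (waterFilling_le (p := p) (ν := ν) (t := t)).eq_or_lt with hfull | hlt
  · simp [hfull]
  rcases (waterFilling_nonneg (ν := ν) (t := t) hp).eq_or_lt with hzero | hpos
  · have hp_ne : (0 : K) ≠ p := (hzero.trans_lt hlt).ne
    simp [← hzero, hp_ne]
  · rw [if_pos ⟨hpos, hlt⟩, if_neg hlt.ne, waterFilling_eq_sub hpos hlt]
    field_simp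
    ring

lemma prod_one_add_waterFilling_div {ι : Type*} {I : Finset ι} {θ p P : ι → K}
    (hθ : ∀ i ∈ I, θ i ≠ 0) (hp : ∀ i ∈ I, 0 ≤ p i)
    (hP : ∀ i ∈ I, P i = waterFilling (p i) ν (θ i)) :
    ∏ i ∈ I, (1 + P i / θ i) =
      ν ^ #{i ∈ I | 0 < P i ∧ P i < p i} / (∏ i ∈ I with 0 < P i ∧ P i < p i, θ i) *
        ∏ i ∈ I with P i = p i, (1 + p i / θ i) := by
  rw [← prod_const, ← prod_div_distrib, prod_filter, prod_filter, ← prod_mul_distrib]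
  refine prod_congr rfl fun i hi => ?_
  rw [hP i hi]
  exact one_add_waterFilling_div (hp i hi) (hθ i hi)

end WaterFilling

theorem stmt_5_general {ι : Type*} {I : Finset ι} {θ p P : ι → ℝ} {b C ν : ℝ}
    (hb : 0 < b) (hb_ne : b ≠ 1) (hθ : ∀ i ∈ I, 0 < θ i) (hp : ∀ i ∈ I, 0 ≤ p i)
    (hP : ∀ i ∈ I, P i = waterFilling (p i) ν (θ i))
    (htight : ∑ i ∈ I, Real.logb b (1 + P i / θ i) = C) :
    ν ^ #{i ∈ I | 0 < P i ∧ P i < p i} =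
      b ^ C * (∏ i ∈ I with 0 < P i ∧ P i < p i, θ i) /
        ∏ i ∈ I with P i = p i, (1 + p i / θ i) := by
  have hfactor : ∀ i ∈ I, 0 < 1 + P i / θ i := fun i hi =>
    add_pos_of_pos_of_nonneg one_pos
      (div_nonneg (hP i hi ▸ waterFilling_nonneg (hp i hi)) (hθ i hi).le)
  have hrate : b ^ C = ∏ i ∈ I, (1 + P i / θ i) := by
    rw [← htight, ← Real.logb_prod _ _ fun i hi => (hfactor i hi).ne',
      Real.rpow_logb hb hb_ne (prod_pos hfactor)]
  have hactive : ∏ i ∈ I with 0 < P i ∧ P i < p i, θ i ≠ 0 :=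
    prod_ne_zero_iff.mpr fun i hi => (hθ i (mem_filter.mp hi).1).ne'
  have hsaturated : ∏ i ∈ I with P i = p i, (1 + p i / θ i) ≠ 0 :=
    prod_ne_zero_iff.mpr fun i hi => by
      obtain ⟨hiI, hfull⟩ := mem_filter.mp hi
      exact hfull ▸ (hfactor i hiI).ne'
  rw [hrate, prod_one_add_waterFilling_div (fun i hi => (hθ i hi).ne') hp hP]
  field_simp

/-- Theorem 2, equation (16): formula for the Lagrange multiplier `ν` of the
tight rate constraint under the water-filling allocation. -/
theorem stmt_5 {ι : Type*} [DecidableEq ι] (I : Finset ι) (hI : I.Nonempty)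
    (θ : ι → ℝ) (hθ : ∀ i ∈ I, 0 < θ i)
    (Pmax CI ν : ℝ) (hPmax : 0 < Pmax) (hCI : 0 < CI) (hν : 0 < ν)
    (Pstar : ι → ℝ)
    (hPstar : ∀ i ∈ I, Pstar i = min Pmax (max 0 (ν - θ i)))
    (I₁ I₂ : Finset ι)
    (hI₁ : I₁ = I.filter (fun i => 0 < Pstar i ∧ Pstar i < Pmax))
    (hI₂ : I₂ = I.filter (fun i => Pstar i = Pmax))
    (hI₁ne : I₁.Nonempty)
    (htight : ∑ i ∈ I, Real.logb 2 (1 + Pstar i / θ i) = CI) :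
    ν ^ (I₁.card) =
      (2 : ℝ) ^ CI * (∏ i ∈ I₁, θ i) / (∏ i ∈ I₂, (1 + Pmax / θ i)) := by
  subst hI₁ hI₂
  exact stmt_5_general two_pos (by norm_num) hθ (fun _ _ => hPmax.le) hPstar htight
end

section
/- Consider the fixed-assignment SWIPT problem with P_max = ∞, and let (P_k)_{k∈I∪E} be a feasible power vector. Let i, j be two distinct indices belonging to the same set (either both i, j ∈ I or both i, j ∈ E) with λ_i ≥ λ_j, P_i = 0 and P_j = c > 0. Define Q_k = P_k for k ∉ {i, j}, Q_i = c and Q_j = 0. Then (Q_k)_{k∈I∪E} is also feasible and has the same total power as (P_k). -/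
open Finset

/-- Feasibility for the fixed-assignment SWIPT problem with `P_max = ∞`. -/
def SwiptFeasible {ι : Type*} [DecidableEq ι] (I E : Finset ι)
    (lam : ι → ℝ) (s CI CEH : ℝ) (P : ι → ℝ) : Prop :=
  (∀ i ∈ I ∪ E, 0 ≤ P i) ∧
  (∑ i ∈ I, Real.logb 2 (1 + P i * lam i / (1 + s * ∑ j ∈ I ∪ E, P j)) ≥ CI) ∧
  (∑ i ∈ E, (P i * lam i + s * ∑ j ∈ I ∪ E, P j) ≥ CEH)

/-!
Since `P i = 0`, the vector `Q` is `P` with its entries at `i` and `j` interchanged, so the total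
power, and with it the noise level and the constant part of the harvested energy, is unchanged.
For powers `x ≤ y` and gains `b ≤ a` (divided by the noise level when computing the rate), giving
`y` to the gain `a` can only increase both

* the harvested energy, because `x * a + y * b ≤ x * b + y * a`;
* the rate, because `(1 + x * a) * (1 + y * b) ≤ (1 + x * b) * (1 + y * a)`: the two sides have
  the same quadratic term, so this is again the previous inequality.
-/

section Swap

variable {ι α M : Type*} [DecidableEq ι] {S : Finset ι} {i j : ι}

theorem swap_mem_iff_of_mem_iff_mem (hS : i ∈ S ↔ j ∈ S) (k : ι) :
    Equiv.swap i j k ∈ S ↔ k ∈ S := by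
  rw [Equiv.swap_apply_def]
  split_ifs with hki hkj
  · rw [hki, hS]
  · rw [hkj, hS]
  · rfl

theorem sum_comp_swap_of_mem_iff_mem [AddCommMonoid M] (hS : i ∈ S ↔ j ∈ S) (f : ι → M) :
    ∑ k ∈ S, f (Equiv.swap i j k) = ∑ k ∈ S, f k :=
  sum_equiv (Equiv.swap i j) (fun k => (swap_mem_iff_of_mem_iff_mem hS k).symm)
    fun _ _ => rfl

theorem sum_le_sum_comp_swap [AddCommMonoid M] [Preorder M] [AddLeftMono M]
    (hS : i ∈ S ↔ j ∈ S) {f : ι → α → M} {P : ι → α}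
    (hpair : i ∈ S → f i (P i) + f j (P j) ≤ f i (P j) + f j (P i)) :
    ∑ k ∈ S, f k (P k) ≤ ∑ k ∈ S, f k (P (Equiv.swap i j k)) := by
  have off_pair {k : ι} (hki : k ≠ i) (hkj : k ≠ j) :
      f k (P k) = f k (P (Equiv.swap i j k)) := by
    rw [Equiv.swap_apply_of_ne_of_ne hki hkj]
  by_cases hi : i ∈ S
  · obtain rfl | hij := eq_or_ne i j
    · simp
    have hsub : {i, j} ⊆ S := by simp [insert_subset_iff, hi, hS.1 hi]
    have hrest : ∑ k ∈ S \ {i, j}, f k (P k) =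
        ∑ k ∈ S \ {i, j}, f k (P (Equiv.swap i j k)) :=
      sum_congr rfl fun k hk => by
        simp only [mem_sdiff, mem_insert, mem_singleton, not_or] at hk
        exact off_pair hk.2.1 hk.2.2
    calc ∑ k ∈ S, f k (P k)
        = ∑ k ∈ S \ {i, j}, f k (P k) + (f i (P i) + f j (P j)) := by
          rw [← sum_sdiff hsub, sum_pair hij]
      _ ≤ ∑ k ∈ S \ {i, j}, f k (P (Equiv.swap i j k)) + (f i (P j) + f j (P i)) :=
          add_le_add hrest.le (hpair hi)
      _ = ∑ k ∈ S, f k (P (Equiv.swap i j k)) := by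
          rw [← sum_sdiff hsub, sum_pair hij, Equiv.swap_apply_left, Equiv.swap_apply_right]
  · have hj : j ∉ S := mt hS.2 hi
    exact (sum_congr rfl fun k hk =>
      off_pair (ne_of_mem_of_not_mem hk hi) (ne_of_mem_of_not_mem hk hj)).le

end Swap

theorem logb_one_add_mul_add_logb_one_add_mul_le {β x y a b : ℝ} (hβ : 1 < β)
    (hx : 0 ≤ x) (hxy : x ≤ y) (hb : 0 ≤ b) (hba : b ≤ a) :
    Real.logb β (1 + x * a) + Real.logb β (1 + y * b) ≤
      Real.logb β (1 + y * a) + Real.logb β (1 + x * b) := by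
  have hy : 0 ≤ y := hx.trans hxy
  have ha : 0 ≤ a := hb.trans hba
  rw [← Real.logb_mul (by positivity) (by positivity),
    ← Real.logb_mul (by positivity) (by positivity)]
  refine Real.logb_le_logb_of_le hβ (by positivity) ?_
  linear_combination mul_add_mul_le_mul_add_mul hxy hba

theorem mem_iff_mem_of_disjoint {ι : Type*} {I E : Finset ι} (hIE : Disjoint I E) {i j : ι}
    (hsame : (i ∈ I ∧ j ∈ I) ∨ (i ∈ E ∧ j ∈ E)) : i ∈ I ↔ j ∈ I := by
  rcases hsame with ⟨hi, hj⟩ | ⟨hi, hj⟩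
  · exact iff_of_true hi hj
  · exact iff_of_false (disjoint_right.1 hIE hi) (disjoint_right.1 hIE hj)

theorem stmt_13_general {ι : Type*} [DecidableEq ι] {I E : Finset ι} {lam : ι → ℝ}
    {s CI CEH : ℝ} (hs : 0 ≤ s) {P : ι → ℝ} (hP : SwiptFeasible I E lam s CI CEH P)
    {i j : ι} (hI : i ∈ I ↔ j ∈ I) (hE : i ∈ E ↔ j ∈ E)
    (hlam : 0 ≤ lam j) (hlamij : lam j ≤ lam i) (hPij : P i ≤ P j) :
    SwiptFeasible I E lam s CI CEH (P ∘ Equiv.swap i j) ∧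
      ∑ k ∈ I ∪ E, (P ∘ Equiv.swap i j) k = ∑ k ∈ I ∪ E, P k := by
  have hU : i ∈ I ∪ E ↔ j ∈ I ∪ E := by simp only [mem_union, hI, hE]
  have htotal : ∑ k ∈ I ∪ E, (P ∘ Equiv.swap i j) k = ∑ k ∈ I ∪ E, P k :=
    sum_comp_swap_of_mem_iff_mem hU P
  obtain ⟨hnonneg, hrate, henergy⟩ := hP
  have hT : 0 ≤ ∑ k ∈ I ∪ E, P k := sum_nonneg hnonneg
  refine ⟨⟨fun k hk => hnonneg _ ((swap_mem_iff_of_mem_iff_mem hU k).2 hk), ?_, ?_⟩, htotal⟩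
  · rw [htotal]
    simp only [mul_div_assoc] at hrate ⊢
    refine hrate.le.trans (sum_le_sum_comp_swap hI
      (f := fun k p => Real.logb 2 (1 + p * (lam k / (1 + s * ∑ l ∈ I ∪ E, P l))))
      fun hi => ?_)
    have hPi : 0 ≤ P i := hnonneg i (mem_union_left E hi)
    exact logb_one_add_mul_add_logb_one_add_mul_le one_lt_two hPi hPij (by positivity) (by gcongr)
  · rw [htotal]
    refine henergy.le.trans (sum_le_sum_comp_swap hE
      (f := fun k p => p * lam k + s * ∑ l ∈ I ∪ E, P l) fun _ => ?_)
    linear_combination mul_add_mul_le_mul_add_mul hPij hlamij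

/-- Remark 2 (exchange argument): moving power from a weaker eigenchannel to a
stronger zero-power eigenchannel of the same type preserves feasibility and
total power. -/
theorem stmt_13 {ι : Type*} [DecidableEq ι] (I E : Finset ι)
    (hIE : Disjoint I E) (hI : I.Nonempty) (hE : E.Nonempty)
    (lam : ι → ℝ) (hlam : ∀ i ∈ I ∪ E, 0 < lam i)
    (s CI CEH : ℝ) (hs : 0 ≤ s) (hCI : 0 < CI) (hCEH : 0 < CEH)
    (P : ι → ℝ) (hP : SwiptFeasible I E lam s CI CEH P)
    (i j : ι) (hij : i ≠ j)
    (hsame : (i ∈ I ∧ j ∈ I) ∨ (i ∈ E ∧ j ∈ E))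
    (hlamij : lam j ≤ lam i)
    (c : ℝ) (hc : 0 < c) (hPi : P i = 0) (hPj : P j = c)
    (Q : ι → ℝ)
    (hQ : Q = fun k => if k = i then c else if k = j then 0 else P k) :
    SwiptFeasible I E lam s CI CEH Q ∧
    ∑ k ∈ I ∪ E, Q k = ∑ k ∈ I ∪ E, P k := by
  have hQswap : Q = P ∘ Equiv.swap i j := by
    ext k
    simp only [hQ, Function.comp_apply, Equiv.swap_apply_def, apply_ite P, hPi, hPj]
  have hlamj : 0 ≤ lam j := (hlam j (by grind)).le
  have hPij : P i ≤ P j := by rw [hPi, hPj]; exact hc.le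
  rw [hQswap]
  exact stmt_13_general hs hP (mem_iff_mem_of_disjoint hIE hsame)
    (mem_iff_mem_of_disjoint hIE.symm hsame.symm) hlamj hlamij hPij
end

section
/- Let n ≥ 1, let μ_1 ≥ μ_2 ≥ … ≥ μ_n > 0, let P_max > 0, and let C be a real number with 0 ≤ C ≤ P_max·∑_{i=1}^n μ_i. Define the greedy allocation P*_i = min(P_max, max(0, (C − P_max·∑_{m<i} μ_m)/μ_i)) for i = 1, …, n. Then 0 ≤ P*_i ≤ P_max for all i, ∑_{i=1}^n μ_i P*_i ≥ C, and for every vector (P_i) with 0 ≤ P_i ≤ P_max for all i and ∑_{i=1}^n μ_i P_i ≥ C, one has ∑_{i=1}^n P*_i ≤ ∑_{i=1}^n P_i. -/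
open Finset

/-!
Filling in order of decreasing coefficient produces an allocation `Q` whose last nonempty channel
`k` is preceded by full channels and followed by empty ones. Comparing it with a competitor `P`,
the differences `Q i - P i` are therefore nonnegative before `k`, where `μ i ≥ μ k`, and
nonpositive after `k`, where `μ i ≤ μ k`; hence `μ k * ∑ (Q i - P i) ≤ ∑ μ i * (Q i - P i)`.
The right-hand side is nonpositive because filling harvests no more than is required.
-/

section Optimality

variable {ι R : Type*} [Ring R] [LinearOrder R] [IsStrictOrderedRing R]
  {s : Finset ι} {μ P Q : ι → R}

theorem sum_le_sum_of_mul_sub_le {c : R} (hc : 0 < c)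
    (hterm : ∀ i ∈ s, c * (Q i - P i) ≤ μ i * (Q i - P i))
    (hQP : ∑ i ∈ s, μ i * Q i ≤ ∑ i ∈ s, μ i * P i) : ∑ i ∈ s, Q i ≤ ∑ i ∈ s, P i := by
  have hdiff : c * ∑ i ∈ s, (Q i - P i) ≤ 0 :=
    calc c * ∑ i ∈ s, (Q i - P i) = ∑ i ∈ s, c * (Q i - P i) := mul_sum ..
      _ ≤ ∑ i ∈ s, μ i * (Q i - P i) := sum_le_sum hterm
      _ = ∑ i ∈ s, μ i * Q i - ∑ i ∈ s, μ i * P i := by simp only [mul_sub, sum_sub_distrib]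
      _ ≤ 0 := sub_nonpos.2 hQP
  rw [← sub_nonpos, ← sum_sub_distrib]
  exact nonpos_of_mul_nonpos_right hdiff hc

theorem sum_le_sum_of_mul_sum_le_of_antitoneOn [LinearOrder ι]
    (hμpos : ∀ i ∈ s, 0 < μ i) (hμ : AntitoneOn μ s) (hP : ∀ i ∈ s, 0 ≤ P i)
    (hPQ : ∀ i ∈ s, ∀ j ∈ s, i < j → 0 < Q j → P i ≤ Q i)
    (hsum : ∑ i ∈ s, μ i * Q i ≤ ∑ i ∈ s, μ i * P i) : ∑ i ∈ s, Q i ≤ ∑ i ∈ s, P i := by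
  by_cases hpos : ∃ i ∈ s, 0 < Q i
  · obtain ⟨k, ⟨hks, hk⟩, hkmax⟩ : ∃ k, (k ∈ s ∧ 0 < Q k) ∧ ∀ i ∈ s, 0 < Q i → i ≤ k := by
      simpa [Finset.Nonempty, hpos] using exists_max_image {i ∈ s | 0 < Q i} id
    refine sum_le_sum_of_mul_sub_le (hμpos k hks) (fun i hi ↦ ?_) hsum
    rcases lt_trichotomy i k with hik | rfl | hki
    · exact mul_le_mul_of_nonneg_right (hμ hi hks hik.le) (sub_nonneg.2 (hPQ i hi k hks hik hk))
    · rfl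
    · have hQi : Q i ≤ 0 := not_lt.1 fun h ↦ hki.not_ge (hkmax i hi h)
      exact mul_le_mul_of_nonpos_right (hμ hks hi hki.le) (sub_nonpos.2 (hQi.trans (hP i hi)))
  · push Not at hpos
    exact sum_le_sum fun i hi ↦ (hpos i hi).trans (hP i hi)

end Optimality

theorem min_max_zero_add_min_max_zero_sub {G : Type*} [AddCommGroup G] [LinearOrder G]
    [IsOrderedAddMonoid G] {a b : G} (ha : 0 ≤ a) (hb : 0 ≤ b) (c : G) :
    min a (max 0 c) + min b (max 0 (c - a)) = min (a + b) (max 0 c) := by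
  rcases le_total c a with hca | hac
  · rw [max_eq_left (sub_nonpos.2 hca), min_eq_right hb, add_zero,
      min_eq_right (max_le ha hca), min_eq_right (max_le (add_nonneg ha hb)
        (hca.trans (le_add_of_nonneg_right hb)))]
  · rw [max_eq_right (ha.trans hac), max_eq_right (sub_nonneg.2 hac), min_eq_left hac,
      ← min_add_add_left, add_sub_cancel]

section SequentialFilling

variable {ι K : Type*} [LinearOrder ι] [Field K] [LinearOrder K]

/-- The greedy allocation that fills the channels of `s` in increasing order of their index, each
up to its capacity `cap i`, until the harvested energy `∑ i ∈ s, μ i * P i` reaches `C`. The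
formula subtracts from `C` what the earlier channels would harvest at full capacity: if they are
not all full, then `C` is already met and the maximum with `0` leaves channel `i` empty. -/
def sequentialFill (s : Finset ι) (μ cap : ι → K) (C : K) (i : ι) : K :=
  min (cap i) (max 0 ((C - ∑ m ∈ s with m < i, μ m * cap m) / μ i))

namespace sequentialFill

variable {s : Finset ι} {μ cap : ι → K} {C : K} {i j : ι}

theorem nonneg (hcap : 0 ≤ cap i) : 0 ≤ sequentialFill s μ cap C i :=
  le_min hcap (le_max_left _ _)

theorem le_cap : sequentialFill s μ cap C i ≤ cap i :=
  min_le_left _ _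

theorem insert_of_le (hij : i ≤ j) :
    sequentialFill (insert j s) μ cap C i = sequentialFill s μ cap C i := by
  simp only [sequentialFill, filter_insert, hij.not_gt, if_false]

variable [IsStrictOrderedRing K]

theorem mul_eq (hμ : 0 < μ i) :
    μ i * sequentialFill s μ cap C i =
      min (μ i * cap i) (max 0 (C - ∑ m ∈ s with m < i, μ m * cap m)) := by
  rw [sequentialFill, mul_min_of_nonneg _ _ hμ.le, mul_max_of_nonneg _ _ hμ.le, mul_zero,
    mul_div_cancel₀ _ hμ.ne']

theorem sum_mul_eq (hμpos : ∀ i ∈ s, 0 < μ i) (hcap : ∀ i ∈ s, 0 ≤ cap i) :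
    ∑ i ∈ s, μ i * sequentialFill s μ cap C i = min (∑ i ∈ s, μ i * cap i) (max 0 C) := by
  induction s using Finset.induction_on_max with
  | empty => simp
  | insert j s hlt ih =>
    have hj : j ∉ s := fun hj ↦ (hlt j hj).false
    rw [forall_mem_insert] at hμpos hcap
    have hsum : 0 ≤ ∑ i ∈ s, μ i * cap i :=
      sum_nonneg fun i hi ↦ mul_nonneg (hμpos.2 i hi).le (hcap.2 i hi)
    calc ∑ i ∈ insert j s, μ i * sequentialFill (insert j s) μ cap C i
        = μ j * sequentialFill s μ cap C j + ∑ i ∈ s, μ i * sequentialFill s μ cap C i := by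
          rw [sum_insert hj, insert_of_le le_rfl]
          congr 1
          exact sum_congr rfl fun i hi ↦ by rw [insert_of_le (hlt i hi).le]
      _ = min (∑ i ∈ s, μ i * cap i) (max 0 C) +
            min (μ j * cap j) (max 0 (C - ∑ i ∈ s, μ i * cap i)) := by
          rw [mul_eq hμpos.1, filter_true_of_mem hlt, ih hμpos.2 hcap.2, add_comm]
      _ = min (∑ i ∈ insert j s, μ i * cap i) (max 0 C) := by
          rw [min_max_zero_add_min_max_zero_sub hsum (mul_nonneg hμpos.1.le hcap.1),
            sum_insert hj, add_comm]

theorem eq_cap_of_lt_of_pos (hμpos : ∀ i ∈ s, 0 < μ i) (hcap : ∀ i ∈ s, 0 ≤ cap i)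
    (hi : i ∈ s) (hj : j ∈ s) (hij : i < j) (hpos : 0 < sequentialFill s μ cap C j) :
    sequentialFill s μ cap C i = cap i := by
  have hbefore : ∑ m ∈ s with m < j, μ m * cap m < C := by
    have hmul := mul_pos (hμpos j hj) hpos
    rw [mul_eq (hμpos j hj)] at hmul
    simpa using (lt_min_iff.1 hmul).2
  have hstep : μ i * cap i + ∑ m ∈ s with m < i, μ m * cap m ≤
      ∑ m ∈ s with m < j, μ m * cap m := by
    have hi_notMem : i ∉ {m ∈ s | m < i} := fun h ↦ (mem_filter.1 h).2.false
    rw [← sum_insert (f := fun m ↦ μ m * cap m) hi_notMem]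
    refine sum_le_sum_of_subset_of_nonneg (fun m hm ↦ ?_) fun m hm _ ↦ ?_
    · grind
    · have hms := (mem_filter.1 hm).1
      exact mul_nonneg (hμpos m hms).le (hcap m hms)
  refine min_eq_left (le_max_of_le_right ?_)
  rw [le_div_iff₀' (hμpos i hi), le_sub_iff_add_le]
  exact hstep.trans hbefore.le

theorem sum_le_of_feasible {P : ι → K} (hμpos : ∀ i ∈ s, 0 < μ i) (hμ : AntitoneOn μ s)
    (hP : ∀ i ∈ s, 0 ≤ P i ∧ P i ≤ cap i) (hC : C ≤ ∑ i ∈ s, μ i * P i) :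
    ∑ i ∈ s, sequentialFill s μ cap C i ≤ ∑ i ∈ s, P i := by
  have hcap : ∀ i ∈ s, 0 ≤ cap i := fun i hi ↦ (hP i hi).1.trans (hP i hi).2
  refine sum_le_sum_of_mul_sum_le_of_antitoneOn hμpos hμ (fun i hi ↦ (hP i hi).1)
    (fun i hi j hj hij hpos ↦ ?_) ?_
  · rw [eq_cap_of_lt_of_pos hμpos hcap hi hj hij hpos]
    exact (hP i hi).2
  · rw [sum_mul_eq hμpos hcap]
    exact min_le_of_right_le
      (max_le (sum_nonneg fun i hi ↦ mul_nonneg (hμpos i hi).le (hP i hi).1) hC)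

end sequentialFill

theorem sequentialFill_Icc_const {μ : ℕ → K} {p C : K} {a b i : ℕ} (hi : i ∈ Icc a b) :
    sequentialFill (Icc a b) μ (fun _ ↦ p) C i =
      min p (max 0 ((C - p * ∑ m ∈ Ico a i, μ m) / μ i)) := by
  have hfilter : {m ∈ Icc a b | m < i} = Ico a i := by grind
  rw [sequentialFill, hfilter, ← sum_mul, mul_comm]

theorem stmt_17_general [IsStrictOrderedRing K] {s : Finset ι} {μ cap Pstar : ι → K} {C : K}
    (hμpos : ∀ i ∈ s, 0 < μ i) (hμ : AntitoneOn μ s) (hcap : ∀ i ∈ s, 0 ≤ cap i)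
    (hC : C ≤ ∑ i ∈ s, μ i * cap i)
    (hPstar : ∀ i ∈ s, Pstar i = sequentialFill s μ cap C i) :
    (∀ i ∈ s, 0 ≤ Pstar i ∧ Pstar i ≤ cap i) ∧
    C ≤ ∑ i ∈ s, μ i * Pstar i ∧
    ∀ P : ι → K, (∀ i ∈ s, 0 ≤ P i ∧ P i ≤ cap i) → C ≤ ∑ i ∈ s, μ i * P i →
      ∑ i ∈ s, Pstar i ≤ ∑ i ∈ s, P i := by
  refine ⟨fun i hi ↦ ?_, ?_, fun P hP hPC ↦ ?_⟩
  · rw [hPstar i hi]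
    exact ⟨sequentialFill.nonneg (hcap i hi), sequentialFill.le_cap⟩
  · rw [sum_congr rfl fun i hi ↦ congrArg (μ i * ·) (hPstar i hi),
      sequentialFill.sum_mul_eq hμpos hcap]
    exact le_min hC (le_max_right 0 C)
  · rw [sum_congr rfl hPstar]
    exact sequentialFill.sum_le_of_feasible hμpos hμ hP hPC

end SequentialFilling

/-- Optimality of sequential filling for the energy-harvesting subproblem
(Case 2 of Section IV-B): the minimum-total-power allocation satisfying a
linear constraint `∑ μ_i P_i ≥ C` under box constraints `0 ≤ P_i ≤ P_max` is
obtained by filling eigenchannels sequentially from the largest coefficient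
to the smallest. -/
theorem stmt_17 (n : ℕ) (hn : 1 ≤ n) (μ : ℕ → ℝ)
    (hμpos : ∀ i, 1 ≤ i → i ≤ n → 0 < μ i)
    (hμmono : ∀ i j, 1 ≤ i → i ≤ j → j ≤ n → μ j ≤ μ i)
    (Pmax : ℝ) (hPmax : 0 < Pmax)
    (C : ℝ) (hC0 : 0 ≤ C) (hCle : C ≤ Pmax * ∑ i ∈ Finset.Icc 1 n, μ i)
    (Pstar : ℕ → ℝ)
    (hPstar : ∀ i, 1 ≤ i → i ≤ n →
      Pstar i = min Pmax (max 0 ((C - Pmax * ∑ m ∈ Finset.Ico 1 i, μ m) / μ i))) :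
    (∀ i, 1 ≤ i → i ≤ n → 0 ≤ Pstar i ∧ Pstar i ≤ Pmax) ∧
    (∑ i ∈ Finset.Icc 1 n, μ i * Pstar i ≥ C) ∧
    (∀ P : ℕ → ℝ, (∀ i, 1 ≤ i → i ≤ n → 0 ≤ P i ∧ P i ≤ Pmax) →
      (∑ i ∈ Finset.Icc 1 n, μ i * P i ≥ C) →
      ∑ i ∈ Finset.Icc 1 n, Pstar i ≤ ∑ i ∈ Finset.Icc 1 n, P i) := by
  simpa only [mem_Icc, and_imp, ge_iff_le] using stmt_17_general (s := Icc 1 n)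
    (cap := fun _ ↦ Pmax) (C := C) (Pstar := Pstar)
    (fun i hi ↦ hμpos i (mem_Icc.1 hi).1 (mem_Icc.1 hi).2)
    (fun i hi j hj hij ↦ hμmono i j (mem_Icc.1 hi).1 hij (mem_Icc.1 hj).2)
    (fun _ _ ↦ hPmax.le) (by rwa [← sum_mul, mul_comm])
    fun i hi ↦ (hPstar i (mem_Icc.1 hi).1 (mem_Icc.1 hi).2).trans (sequentialFill_Icc_const hi).symm
end
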